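/- Let (N,n) be a pair of integers with N>1, 0 ≤ n ≤ N−1, and gcd(N,n) > 1. Suppose that (a) each of n, n+1, 2n+1, 3n+1, 4n+1 has a common factor greater than 1 with N; and (b) gcd(N, 3n+2) = gcd(N, 5n+2) = 1. Then c(N,n) ≥ 1. -/

import Mathlib

namespace Paper

noncomputable section

/-- Closed disk attached to a rational `α = a/b` in lowest terms:
center `α`, radius `1/b`. -/
def disk (α : ℚ) : Set ℂ := Metric.closedBall (α : ℂ) (1 / (α.den : ℝ))

/-- The closed disk `D_{a/b}` of radius `1/b` centered at `a/b`. -/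
def diskAt (a b : ℕ) : Set ℂ := Metric.closedBall ((a : ℂ) / (b : ℂ)) (1 / (b : ℝ))

/-- The north pole `P_α = a/b + i/b` of the disk of `α = a/b` in lowest terms. -/
def northPole (α : ℚ) : ℂ := (α : ℂ) + Complex.I / (α.den : ℂ)

/-- Complexity of the north pole of `α` relative to a set `S` of rationals:
the number of `β ∈ S`, `β ≠ α`, whose disk contains `P_α`. -/
def poleComplexity (S : Set ℚ) (α : ℚ) : ℕ :=
  {β ∈ S | β ≠ α ∧ northPole α ∈ disk β}.ncard

/-- Rationals `a/b ∈ [n/N, (n+1)/N]` in lowest terms with `N ∣ b`. -/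
def candB (N n : ℕ) : Set ℚ :=
  {α | (n : ℚ) / (N : ℚ) ≤ α ∧ α ≤ ((n : ℚ) + 1) / (N : ℚ) ∧ N ∣ α.den}

/-- The region `R_{N,n}` for a bad pair `(N,n)`. -/
def RB (N n : ℕ) : Set ℂ := ⋃ α ∈ candB N n, disk α

/-- The set `S_{N,n}` for a bad pair `(N,n)`. -/
def SB (N n : ℕ) : Set ℚ :=
  {α | α ∈ candB N n ∧ ¬ disk α ⊆ ⋃ β ∈ candB N n \ {α}, disk β}

/-- The complexity `c(N,n)` for a bad pair `(N,n)`. -/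
def cB (N n : ℕ) : ℕ := sSup (poleComplexity (SB N n) '' SB N n)

/-- If `A` and `B` are coprime, some `A + t * B` with `0 ≤ t < N` is coprime to `N`. -/
theorem exists_isCoprime_add_mul {A B : ℤ} (h : IsCoprime A B) {N : ℕ} (hN : 0 < N) :
    ∃ t : ℤ, 0 ≤ t ∧ t < N ∧ IsCoprime (A + t * B) N := by
  let ps : Finset ℕ := {p ∈ N.primeFactors | ¬ (p : ℤ) ∣ A}
  let s : ℤ := ((∏ p ∈ ps, p : ℕ) : ℤ)
  have hs : IsCoprime (A + s * B) N := by
    rw [Int.isCoprime_iff_gcd_eq_one]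
    apply Nat.coprime_of_dvd
    intro p pp hp hpN
    rw [← Int.natCast_dvd] at hp
    rw [Int.natAbs_natCast] at hpN
    have pp' := Nat.prime_iff_prime_int.mp pp
    by_cases hpA : (p : ℤ) ∣ A
    · rcases pp'.dvd_or_dvd ((dvd_add_right hpA).mp hp) with h' | h'
      · obtain ⟨q, hq, hpq⟩ :=
          (pp.prime.dvd_finsetProd_iff _).mp (Int.natCast_dvd_natCast.mp h')
        rw [Finset.mem_filter, Nat.mem_primeFactors] at hq
        rw [(Nat.prime_dvd_prime_iff_eq pp hq.1.1).mp hpq] at hpA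
        exact hq.2 hpA
      · exact pp'.not_isUnit (h.isUnit_of_dvd' hpA h')
    · have hps : p ∈ ps :=
        Finset.mem_filter.mpr ⟨Nat.mem_primeFactors.mpr ⟨pp, hpN, hN.ne'⟩, hpA⟩
      have : (p : ℤ) ∣ s := Int.natCast_dvd_natCast.mpr (Finset.dvd_prod_of_mem _ hps)
      exact hpA ((dvd_add_left (this.mul_right B)).mp hp)
  have hN' : (0 : ℤ) < N := by exact_mod_cast hN
  refine ⟨s % N, Int.emod_nonneg _ hN'.ne', Int.emod_lt_of_pos _ hN', ?_⟩
  have : A + s % N * B = A + s * B + N * (-(s / N) * B) := by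
    rw [Int.emod_def]; ring
  rw [this]
  exact hs.add_mul_left_left _

/-- The rational `(n + k/m)/N`. -/
def frac (N n : ℕ) (k m : ℤ) : ℚ := ((n * m + k : ℤ) : ℚ) / ((N * m : ℤ) : ℚ)

/-- The condition on `k/m ∈ [0, 1]` for `frac N n k m` to be a candidate with denominator `N m`. -/
structure IsGood (N n : ℕ) (k m : ℤ) : Prop where
  pos : 0 < m
  nonneg : 0 ≤ k
  le : k ≤ m
  coprime : IsCoprime k m
  coprime_level : IsCoprime (n * m + k) (N : ℤ)

section

variable {N n : ℕ} {k m l d : ℤ}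

theorem IsGood.den_frac (hN : 0 < N) (h : IsGood N n k m) : ((frac N n k m).den : ℤ) = N * m := by
  refine Rat.den_div_eq_of_coprime (mul_pos (by exact_mod_cast hN) h.pos) ?_
  rw [← Int.isCoprime_iff_nat_coprime]
  refine h.coprime_level.mul_right ?_
  rw [add_comm]
  exact h.coprime.add_mul_right_left _

theorem IsGood.frac_mem (hN : 0 < N) (h : IsGood N n k m) : frac N n k m ∈ candB N n := by
  have hN' : (0 : ℚ) < N := by exact_mod_cast hN
  have hm : (0 : ℚ) < m := by exact_mod_cast h.pos
  have hk : (0 : ℚ) ≤ k := by exact_mod_cast h.nonneg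
  have hkm : (k : ℚ) ≤ m := by exact_mod_cast h.le
  refine ⟨?_, ?_, ?_⟩
  · rw [frac, div_le_div_iff₀ hN' (by push_cast; positivity)]
    push_cast
    nlinarith
  · rw [frac, div_le_div_iff₀ (by push_cast; positivity) hN']
    push_cast
    nlinarith
  · rw [← Int.natCast_dvd_natCast, h.den_frac hN]
    exact dvd_mul_right _ _

theorem exists_isGood_of_mem (hN : 0 < N) {α : ℚ} (h : α ∈ candB N n) :
    ∃ k m : ℤ, IsGood N n k m ∧ α = frac N n k m := by
  obtain ⟨h₁, h₂, c, hc⟩ := h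
  have hN' : (0 : ℚ) < N := by exact_mod_cast hN
  have hcpos : 0 < c := Nat.pos_of_ne_zero (by rintro rfl; exact α.den_nz (by simp at hc))
  have hc' : (0 : ℚ) < c := by exact_mod_cast hcpos
  have hα : α = (α.num : ℚ) / (N * c) := by
    conv_lhs => rw [← Rat.num_div_den α, hc]
    push_cast
    rfl
  have hco : IsCoprime α.num ((N : ℤ) * c) := by
    have := α.reduced
    rw [hc] at this
    rw [Int.isCoprime_iff_nat_coprime]
    simpa [Int.natAbs_mul] using this
  rw [hα, div_le_div_iff₀ hN' (by positivity)] at h₁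
  rw [hα, div_le_div_iff₀ (by positivity) hN'] at h₂
  have h₁' : (n : ℚ) * c ≤ α.num := by nlinarith
  have h₂' : (α.num : ℚ) ≤ n * c + c := by nlinarith
  refine ⟨α.num - n * c, c, ⟨by exact_mod_cast hcpos, ?_, ?_, ?_, ?_⟩, ?_⟩
  · have : (n : ℤ) * c ≤ α.num := by exact_mod_cast h₁'
    linarith
  · have : α.num ≤ (n : ℤ) * c + c := by exact_mod_cast h₂'
    linarith
  · have := hco.of_mul_right_right.add_mul_right_left (-(n : ℤ))
    convert! this using 1
    ring
  · convert! hco.of_mul_right_left using 1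
    ring
  · rw [frac]
    push_cast
    rw [add_sub_cancel]
    exact hα

theorem IsGood.disk_subset (hN : 0 < N) (h : IsGood N n k m) (h' : IsGood N n l d)
    (hle : |k * d - l * m| + d ≤ m) : disk (frac N n k m) ⊆ disk (frac N n l d) := by
  have hN' : (0 : ℝ) < N := by exact_mod_cast hN
  have hm : (0 : ℝ) < m := by exact_mod_cast h.pos
  have hd : (0 : ℝ) < d := by exact_mod_cast h'.pos
  have e₁ : ((frac N n k m).den : ℝ) = N * m := by exact_mod_cast h.den_frac hN
  have e₂ : ((frac N n l d).den : ℝ) = N * d := by exact_mod_cast h'.den_frac hN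
  apply Metric.closedBall_subset_closedBall'
  have hdist : dist ((frac N n k m : ℚ) : ℂ) ((frac N n l d : ℚ) : ℂ)
      = |((k * d - l * m : ℤ) : ℝ)| / (N * m * d) := by
    rw [show ((frac N n k m : ℚ) : ℂ) = (((frac N n k m : ℚ) : ℝ) : ℂ) by push_cast; rfl,
      show ((frac N n l d : ℚ) : ℂ) = (((frac N n l d : ℚ) : ℝ) : ℂ) by push_cast; rfl,
      Complex.dist_eq, ← Complex.ofReal_sub, Complex.norm_real, Real.norm_eq_abs]
    trans |((k * d - l * m : ℤ) : ℝ) / (N * m * d)|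
    swap
    · rw [abs_div, abs_of_pos (show (0 : ℝ) < N * m * d by positivity)]
    congr 1
    simp only [frac]
    push_cast
    field_simp
    ring
  have hle' : |((k * d - l * m : ℤ) : ℝ)| + d ≤ m := by exact_mod_cast hle
  rw [hdist, e₁, e₂]
  have : (1 : ℝ) / (N * m) + |((k * d - l * m : ℤ) : ℝ)| / (N * m * d)
      = (|((k * d - l * m : ℤ) : ℝ)| + d) / (N * m * d) := by
    field_simp
    ring
  rw [this, div_le_div_iff₀ (by positivity) (by positivity)]
  nlinarith [mul_pos hN' hd]

theorem IsGood.mem_disk_iff (hN : 0 < N) (h : IsGood N n k m) (x y : ℝ) :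
    (⟨(n + x) / N, y / N⟩ : ℂ) ∈ disk (frac N n k m) ↔ (m * x - k) ^ 2 + (m * y) ^ 2 ≤ 1 := by
  have hN' : (0 : ℝ) < N := by exact_mod_cast hN
  have hm : (0 : ℝ) < m := by exact_mod_cast h.pos
  have e₁ : ((frac N n k m).den : ℝ) = N * m := by exact_mod_cast h.den_frac hN
  rw [disk, Metric.mem_closedBall, Complex.dist_eq, e₁,
    ← pow_le_pow_iff_left₀ (norm_nonneg _) (by positivity) two_ne_zero, Complex.sq_norm,
    Complex.normSq_apply]
  have hre : ((⟨(n + x) / N, y / N⟩ : ℂ) - (frac N n k m : ℚ)).re = (m * x - k) / (N * m) := by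
    simp only [frac, Complex.sub_re, Complex.ratCast_re]
    push_cast
    field_simp
    ring
  have him : ((⟨(n + x) / N, y / N⟩ : ℂ) - (frac N n k m : ℚ)).im = (m * y) / (N * m) := by
    simp only [Complex.sub_im, Complex.ratCast_im]
    field_simp
    ring
  rw [hre, him, ← sq, ← sq, div_pow, div_pow, div_pow, ← add_div,
    div_le_div_iff_of_pos_right (by positivity), one_pow]

theorem IsGood.northPole_eq (hN : 0 < N) (h : IsGood N n k m) :
    northPole (frac N n k m) = ⟨(n + (k / m : ℝ)) / N, (1 / m : ℝ) / N⟩ := by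
  have hN' : (0 : ℝ) < N := by exact_mod_cast hN
  have hm : (0 : ℝ) < m := by exact_mod_cast h.pos
  have e₁ : ((frac N n k m).den : ℝ) = N * m := by exact_mod_cast h.den_frac hN
  have e₂ : (Complex.I / ((frac N n k m).den : ℂ)) = Complex.I * ((1 / (N * m) : ℝ) : ℂ) := by
    rw [← e₁]
    push_cast
    ring
  rw [northPole, e₂]
  apply Complex.ext
  · simp only [frac, Complex.add_re, Complex.ratCast_re, Complex.re_mul_ofReal, Complex.I_re]
    push_cast
    field_simp
    ring
  · simp only [Complex.add_im, Complex.ratCast_im, Complex.im_mul_ofReal, Complex.I_im]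
    field_simp
    ring

theorem IsGood.frac_ne_of_lt (hN : 0 < N) (h : IsGood N n k m) (h' : IsGood N n l d)
    (hlt : d < m) : frac N n k m ≠ frac N n l d := by
  intro he
  have := h.den_frac hN
  rw [he, h'.den_frac hN] at this
  have hN' : (N : ℤ) ≠ 0 := by exact_mod_cast hN.ne'
  exact hlt.ne (mul_left_cancel₀ hN' this)

theorem IsGood.notMem_SB (hN : 0 < N) (h : IsGood N n k m) (h' : IsGood N n l d) (hlt : d < m)
    (hle : |k * d - l * m| + d ≤ m) : frac N n k m ∉ SB N n := fun hS =>
  hS.2 ((h.disk_subset hN h' hle).trans (Set.subset_biUnion_of_mem (u := disk)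
    (show frac N n l d ∈ candB N n \ {frac N n k m} from
      ⟨h'.frac_mem hN, (h.frac_ne_of_lt hN h' hlt).symm⟩)))

/-- A point of a disk outside all other good disks witnesses membership in `SB`. -/
theorem IsGood.mem_SB (hN : 0 < N) (h : IsGood N n k m) (x y : ℝ)
    (hxy : (m * x - k) ^ 2 + (m * y) ^ 2 ≤ 1)
    (hout : ∀ l d : ℤ, IsGood N n l d → (l ≠ k ∨ d ≠ m) → 1 < (d * x - l) ^ 2 + (d * y) ^ 2) :
    frac N n k m ∈ SB N n := by
  refine ⟨h.frac_mem hN, fun hsub => ?_⟩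
  obtain ⟨β, hβ, hz⟩ := Set.mem_iUnion₂.mp (hsub ((h.mem_disk_iff hN x y).mpr hxy))
  obtain ⟨l, d, hg, rfl⟩ := exists_isGood_of_mem hN hβ.1
  rw [hg.mem_disk_iff hN] at hz
  refine (hout l d hg ?_).not_ge hz
  by_contra! hc
  exact hβ.2 (by rw [hc.1, hc.2]; rfl)

/-- Away from the endpoints of `[0, 1]`, disks of small radius are contained in larger ones. -/
theorem exists_isGood_abs_le (hN : 1 < N) (h : IsGood N n k m) (h0 : m ≤ k * N) (h1 : 3 * k ≤ 2 * m)
    (hm : 16 * (N : ℤ) ^ 2 < m) :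
    ∃ l d : ℤ, IsGood N n l d ∧ d < m ∧ |k * d - l * m| + d ≤ m := by
  have hNz : (2 : ℤ) ≤ N := by exact_mod_cast hN
  have hmpos := h.pos
  obtain ⟨p₀, q₀, hq₀, hqN₀, hpq⟩ := Real.exists_int_int_abs_mul_sub_le ((k : ℝ) / m)
    (n := 4 * N - 1) (by omega)
  have hcast : (((4 * N - 1 : ℕ) : ℝ) + 1) = 4 * N := by
    rw [Nat.cast_sub (by omega)]
    push_cast
    ring
  have hNr : (0 : ℝ) < N := by exact_mod_cast hN.le.trans_lt' one_pos
  have hmr : (0 : ℝ) < m := by exact_mod_cast hmpos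
  have happ₀ : 4 * N * |k * q₀ - p₀ * m| ≤ m := by
    rw [hcast, show (q₀ : ℝ) * (k / m) - p₀ = (k * q₀ - p₀ * m) / m by field_simp, abs_div,
      abs_of_pos hmr, div_le_div_iff₀ hmr (by positivity)] at hpq
    have : 4 * N * |(k * q₀ - p₀ * m : ℝ)| ≤ m := by linarith
    exact_mod_cast this
  obtain ⟨p, q, hq, hqN, hco, happ⟩ : ∃ p q : ℤ, 0 < q ∧ q < 4 * N ∧ IsCoprime p q ∧
      4 * N * |k * q - p * m| ≤ m := by
    have hg : 0 < Int.gcd p₀ q₀ := Int.gcd_pos_of_ne_zero_right _ hq₀.ne'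
    obtain ⟨p, q, hpq', hp, hq⟩ := Int.exists_gcd_one hg
    have hg' : (1 : ℤ) ≤ Int.gcd p₀ q₀ := by exact_mod_cast hg
    generalize (Int.gcd p₀ q₀ : ℤ) = g at hp hq hg'
    have hq' : 0 < q := by
      rw [hq] at hq₀
      exact pos_of_mul_pos_left hq₀ (by linarith)
    refine ⟨p, q, hq', ?_, Int.isCoprime_iff_gcd_eq_one.mpr hpq', le_trans ?_ happ₀⟩
    · have : q ≤ q₀ := by rw [hq]; nlinarith
      omega
    · rw [hp, hq, show k * (q * g) - p * g * m = (k * q - p * m) * g by ring, abs_mul,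
        abs_of_nonneg (show 0 ≤ g by linarith)]
      exact mul_le_mul_of_nonneg_left (le_mul_of_one_le_right (abs_nonneg _) hg') (by positivity)
  have hup : 4 * N * (k * q - p * m) ≤ m :=
    (mul_le_mul_of_nonneg_left (le_abs_self _) (by positivity)).trans happ
  have hlo : 4 * N * -(k * q - p * m) ≤ m :=
    (mul_le_mul_of_nonneg_left (neg_le_abs _) (by positivity)).trans happ
  have hp : 0 < p := by
    by_contra! hp
    have : p * m ≤ 0 := mul_nonpos_of_nonpos_of_nonneg hp hmpos.le
    have hk : 0 < k := by nlinarith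
    nlinarith
  have hpq' : p < q := by
    by_contra! hp
    have : q * m ≤ p * m := mul_le_mul_of_nonneg_right hp hmpos.le
    have h3 : q * (3 * k) ≤ q * (2 * m) := mul_le_mul_of_nonneg_left h1 hq.le
    have h4 : 1 * m ≤ q * m := mul_le_mul_of_nonneg_right hq hmpos.le
    have h5 : m ≤ 3 * -(k * q - p * m) := by linarith
    nlinarith
  obtain ⟨a, b, hab⟩ := hco
  obtain ⟨d₀, l₀, hd₀, hd₀q, hdl₀⟩ : ∃ d₀ l₀ : ℤ, 0 ≤ d₀ ∧ d₀ < q ∧ p * d₀ - q * l₀ = 1 :=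
    ⟨a % q, -(b + p * (a / q)), Int.emod_nonneg _ hq.ne', Int.emod_lt_of_pos _ hq, by
      rw [Int.emod_def]; linear_combination hab⟩
  obtain ⟨t, ht, htN, hcop⟩ := exists_isCoprime_add_mul
    (show IsCoprime (n * d₀ + l₀) (n * q + p) from ⟨-q, d₀, by linear_combination hdl₀⟩)
    (one_pos.trans hN)
  obtain ⟨d, hd⟩ : ∃ d, d = d₀ + q * t := ⟨_, rfl⟩
  obtain ⟨l, hl⟩ : ∃ l, l = l₀ + p * t := ⟨_, rfl⟩
  have hdl : p * d - q * l = 1 := by rw [hd, hl]; linear_combination hdl₀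
  have hd_nonneg : 0 ≤ d := by rw [hd]; positivity
  have hd_pos : 0 < d := by
    refine hd_nonneg.lt_of_ne ?_
    intro h0
    have h2 : q * (-l) = 1 := by rw [← h0] at hdl; linarith
    have := Int.eq_one_of_mul_eq_one_right hq.le h2
    omega
  have hdN : d ≤ q * N := by
    have : q * (t + 1) ≤ q * N := mul_le_mul_of_nonneg_left (by omega) hq.le
    linarith
  have hd4 : 4 * d ≤ m := by nlinarith
  refine ⟨l, d, ⟨hd_pos, ?_, ?_, ⟨-q, p, by linear_combination hdl⟩, ?_⟩, by linarith, ?_⟩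
  · have : 0 ≤ q * l := by nlinarith
    exact nonneg_of_mul_nonneg_right this hq
  · have : q * l ≤ q * d := by nlinarith
    exact le_of_mul_le_mul_left this hq
  · convert! hcop using 1
    rw [hd, hl]; ring
  · have hE : q * (k * d - l * m) = d * (k * q - p * m) + m := by linear_combination m * hdl
    have hδ : 4 * (d * |k * q - p * m|) ≤ q * m := by
      have h1 : d * |k * q - p * m| ≤ q * N * |k * q - p * m| :=
        mul_le_mul_of_nonneg_right hdN (abs_nonneg _)
      have h2 := mul_le_mul_of_nonneg_left happ hq.le
      linarith
    have hqE : q * |k * d - l * m| ≤ d * |k * q - p * m| + m := by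
      rw [← abs_of_pos hq, ← abs_mul, abs_of_pos hq, hE]
      refine (abs_add_le _ _).trans_eq ?_
      rw [abs_mul, abs_of_pos hd_pos, abs_of_pos hmpos]
    have h4E : q * (4 * |k * d - l * m|) ≤ q * (3 * m) := by
      have : 2 * m ≤ q * m := mul_le_mul_of_nonneg_right (by omega) hmpos.le
      linarith
    have := le_of_mul_le_mul_left h4E hq
    linarith

/-- Elements of `SB` have bounded denominators. -/
theorem IsGood.le_of_mem_SB (hN : 1 < N) (h : IsGood N n k m) (h₂₃ : IsGood N n 2 3)
    (hS : frac N n k m ∈ SB N n) : m ≤ 16 * (N : ℤ) ^ 2 := by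
  by_contra! hm
  have hN0 : 0 < N := one_pos.trans hN
  have hNz : (2 : ℤ) ≤ N := by exact_mod_cast hN
  have hmN : N < m := by nlinarith
  have hm3 : 3 < m := by nlinarith
  have hk0 : 0 < k := by
    refine h.nonneg.lt_of_ne ?_
    rintro rfl
    have := Int.isUnit_iff.mp (isCoprime_zero_left.mp h.coprime)
    omega
  have hkm : k < m := by
    refine h.le.lt_of_ne ?_
    rintro rfl
    have := Int.isUnit_iff.mp (isCoprime_self.mp h.coprime)
    omega
  rcases lt_or_ge (k * N) m with h0 | h0
  · have hg : IsGood N n 1 N := ⟨by omega, by omega, by omega, isCoprime_one_left,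
      ⟨1, -n, by ring⟩⟩
    refine h.notMem_SB hN0 hg hmN ?_ hS
    rw [abs_of_neg (by linarith)]
    nlinarith
  · rcases le_or_gt (3 * k) (2 * m) with h1 | h1
    · obtain ⟨l, d, hg, hlt, hle⟩ := exists_isGood_abs_le hN h h0 h1 hm
      exact h.notMem_SB hN0 hg hlt hle hS
    · refine h.notMem_SB hN0 h₂₃ hm3 ?_ hS
      rw [abs_of_pos (by linarith)]
      linarith

theorem finite_SB (hN : 1 < N) (h₂₃ : IsGood N n 2 3) : (SB N n).Finite := by
  refine (((Set.finite_Icc (0 : ℤ) (16 * (N : ℤ) ^ 2)).prod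
    (Set.finite_Icc (0 : ℤ) (16 * (N : ℤ) ^ 2))).image fun x => frac N n x.1 x.2).subset ?_
  intro α hα
  obtain ⟨k, m, h, rfl⟩ := exists_isGood_of_mem (one_pos.trans hN) hα.1
  have hm := h.le_of_mem_SB hN h₂₃ hα
  exact ⟨(k, m), ⟨⟨h.nonneg, h.le.trans hm⟩, ⟨h.pos.le, hm⟩⟩, rfl⟩

end

/-- For a pair `(N,n)` such that each of `n`, `n+1`, `2n+1`, `3n+1`, `4n+1` has a
common factor `> 1` with `N` while `gcd(N,3n+2) = gcd(N,5n+2) = 1`, we have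
`c(N,n) ≥ 1`. -/
theorem cB_pos (N n : ℕ) (hN : 1 < N) (hn : n ≤ N - 1)
    (hg : 1 < Nat.gcd N n) (h1 : 1 < Nat.gcd N (n + 1))
    (h2 : 1 < Nat.gcd N (2 * n + 1)) (h31 : 1 < Nat.gcd N (3 * n + 1))
    (h41 : 1 < Nat.gcd N (4 * n + 1))
    (h32 : Nat.gcd N (3 * n + 2) = 1) (h52 : Nat.gcd N (5 * n + 2) = 1) :
    1 ≤ cB N n := by
  have hN0 : 0 < N := one_pos.trans hN
  have bad : ∀ a : ℕ, 1 < Nat.gcd N a → ¬ IsCoprime (a : ℤ) N := fun a ha hc => by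
    have := Nat.isCoprime_iff_coprime.mp hc
    rw [Nat.coprime_comm, Nat.Coprime] at this
    omega
  have good : ∀ a : ℕ, Nat.gcd N a = 1 → IsCoprime (a : ℤ) N := fun a ha =>
    Nat.isCoprime_iff_coprime.mpr (Nat.coprime_comm.mp ha)
  have b0 := bad _ hg
  have b1 := bad _ h1
  have b2 := bad _ h2
  have b3 := bad _ h31
  have b4 := bad _ h41
  have g23 : IsGood N n 2 3 := ⟨by norm_num, by norm_num, by norm_num, by norm_num, by
    convert! good _ h32 using 1; push_cast; ring⟩
  have g25 : IsGood N n 2 5 := ⟨by norm_num, by norm_num, by norm_num, by norm_num, by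
    convert! good _ h52 using 1; push_cast; ring⟩
  push_cast at b1 b2 b3 b4
  have key : ∀ l d : ℤ, IsGood N n l d → d < 6 →
      (l = 2 ∧ d = 3) ∨ (l = 3 ∧ d = 4) ∨ (d = 5 ∧ 1 ≤ l ∧ l ≤ 4) := by
    rintro l d ⟨hd, hl, hld, hc, hc'⟩ hd6
    interval_cases d <;> interval_cases l <;> first
      | omega
      | (exfalso; revert hc; norm_num [Int.isCoprime_iff_gcd_eq_one]; done)
      | (exfalso; simp only [mul_comm (n : ℤ), one_mul, add_zero] at hc'; contradiction)
  have s23 : frac N n 2 3 ∈ SB N n := by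
    refine g23.mem_SB hN0 (2 / 3) (1 / 3) (by norm_num) fun l d h hne => ?_
    have hd : 4 ≤ d := by
      by_contra! hd
      have := key l d h (by omega)
      omega
    have hd' : (4 : ℝ) ≤ d := by exact_mod_cast hd
    nlinarith [sq_nonneg ((d : ℝ) * (2 / 3) - l)]
  have s25 : frac N n 2 5 ∈ SB N n := by
    refine g25.mem_SB hN0 (21 / 65) (12 / 65) (by norm_num) fun l d h hne => ?_
    rcases lt_or_ge d 6 with hd | hd
    · rcases key l d h hd with ⟨rfl, rfl⟩ | ⟨rfl, rfl⟩ | ⟨rfl, h1, h4⟩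
      · norm_num
      · norm_num
      · have : l = 1 ∨ l = 3 ∨ l = 4 := by omega
        rcases this with rfl | rfl | rfl <;> norm_num
    · have hd' : (6 : ℝ) ≤ d := by exact_mod_cast hd
      nlinarith [sq_nonneg ((d : ℝ) * (21 / 65) - l)]
  have hfin := finite_SB hN g23
  have hpole : 1 ≤ poleComplexity (SB N n) (frac N n 2 5) := by
    refine (Set.ncard_pos (hfin.subset fun β hβ => hβ.1)).mpr ⟨frac N n 2 3, s23, ?_, ?_⟩
    · exact (g25.frac_ne_of_lt hN0 g23 (by norm_num)).symm
    · rw [g25.northPole_eq hN0, g23.mem_disk_iff hN0]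
      norm_num
  exact hpole.trans (le_csSup (hfin.image _).bddAbove (Set.mem_image_of_mem _ s25))

end

end Paper
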